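/- arXiv:0904.2384 — 3 statements merged into one kernel-verified Lean document; each statement's English description precedes it below -/
import Mathlib

section
/- Let P be a continuous n-homogeneous polynomial (n ≥ 1) on a complex Banach space E and let U := {x ∈ E : Re P(x) > 1/2}. Then: (i) for every R > 1, if x ∈ U satisfies ‖x‖ ≤ R and dist(x, E∖U) ≥ 1/R, then Re P(x) ≥ (1/2)·(R²/(R²−1))^n; (ii) U is open and H_b(U)-convex. -/
/-!
Homogeneity gives `P (t • x) = t ^ n * P x`, so `x ∈ U` shrunk towards the origin leaves `U`
as soon as `t ^ n * Re P x = 1 / 2`. If `ball x (1 / R) ⊆ U` and `‖x‖ ≤ R`, this exit point is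
at distance at least `1 / R` from `x`, hence `t ≤ 1 - 1 / R ^ 2`, which is the estimate on `Re P x`
(`half_mul_pow_le_re`).

For `H_b(U)`-convexity, the estimate bounds `Re P` below by some `c > 1 / 2` on a `U`-bounded
set `A`. The function `exp (-P)` is in `H_b(U)`, because its modulus `exp (-Re P)` is at most
`exp (-1 / 2)` on `U`; testing against it shows `Re P ≥ c` on the whole hull of `A`. Testing
against continuous linear functionals shows, via Hahn-Banach, that the hull is norm bounded. Since
`P` is Lipschitz on bounded sets, a set that is bounded and on which `Re P ≥ c > 1 / 2` keeps a
positive distance from the complement of `U`.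
-/

open Set Metric

variable {E : Type*} [NormedAddCommGroup E] [NormedSpace ℂ E]

/-- A continuous `n`-homogeneous polynomial: `x ↦ M (x, …, x)` for a continuous `n`-linear map. -/
def IsHomogPoly (n : ℕ) (Q : E → ℂ) : Prop :=
  ∃ M : ContinuousMultilinearMap ℂ (fun _ : Fin n => E) ℂ, ∀ x, Q x = M fun _ => x

/-- A continuous polynomial: a finite sum of continuous homogeneous polynomials. -/
def IsContPoly (P : E → ℂ) : Prop :=
  ∃ (N : ℕ) (Q : ℕ → E → ℂ), (∀ k, IsHomogPoly k (Q k)) ∧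
    ∀ x, P x = ∑ k ∈ Finset.range (N + 1), Q k x

/-- `A` is `U`-bounded: contained in `U`, norm bounded, uniformly away from the boundary. -/
def UBounded (U A : Set E) : Prop :=
  A ⊆ U ∧ Bornology.IsBounded A ∧ ∃ d > 0, ∀ a ∈ A, ball a d ⊆ U

/-- `f` is in `H_b(U)`: analytic on `U` and bounded on every `U`-bounded set. -/
def MemHb (U : Set E) (f : E → ℂ) : Prop :=
  AnalyticOnNhd ℂ f U ∧ ∀ A : Set E, UBounded U A → ∃ C : ℝ, ∀ x ∈ A, ‖f x‖ ≤ C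

/-- Polynomial hull `Â_P` of a set `A`: points where each continuous polynomial is dominated by
its sup over `A` (formulated via upper bounds). -/
def polyHull (A : Set E) : Set E :=
  {x | ∀ P : E → ℂ, IsContPoly P → ∀ C : ℝ, (∀ a ∈ A, ‖P a‖ ≤ C) → ‖P x‖ ≤ C}

/-- The set `U_n = {x ∈ U : ‖x‖ ≤ n, ball x (1/n) ⊆ U}`. -/
def UNat (U : Set E) (n : ℕ) : Set E :=
  {x | x ∈ U ∧ ‖x‖ ≤ (n : ℝ) ∧ ball x (1 / (n : ℝ)) ⊆ U}

/-- `Û_P := ⋃ n, (U_n)̂_P`. -/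
def UhatP (U : Set E) : Set E := ⋃ n : ℕ, polyHull (UNat U n)

/-- A continuous character of `H_b(U)`. -/
def IsHbChar (U : Set E) (φ : (E → ℂ) → ℂ) : Prop :=
  φ (fun _ => 1) = 1 ∧
  (∀ f g, MemHb U f → MemHb U g → φ (f + g) = φ f + φ g) ∧
  (∀ (c : ℂ) (f), MemHb U f → φ (c • f) = c * φ f) ∧
  (∀ f g, MemHb U f → MemHb U g → φ (f * g) = φ f * φ g) ∧
  ∃ B : Set E, UBounded U B ∧
    ∀ f, MemHb U f → ∀ C : ℝ, (∀ x ∈ B, ‖f x‖ ≤ C) → ‖φ f‖ ≤ C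

/-- `U` is `H_b(U)`-convex. -/
def HbConvex (U : Set E) : Prop :=
  ∀ A : Set E, UBounded U A →
    UBounded U {x ∈ U | ∀ f, MemHb U f → ∀ C : ℝ, (∀ a ∈ A, ‖f a‖ ≤ C) → ‖f x‖ ≤ C}

/-- Continuous polynomials are dense in `H_b(U)`. -/
def PolysDense (U : Set E) : Prop :=
  ∀ f, MemHb U f → ∀ A : Set E, UBounded U A → ∀ ε > 0,
    ∃ P : E → ℂ, IsContPoly P ∧ ∀ x ∈ A, ‖f x - P x‖ ≤ ε

lemma IsHomogPoly.map_smul {n : ℕ} {P : E → ℂ} (hP : IsHomogPoly n P) (t : ℂ) (x : E) :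
    P (t • x) = t ^ n * P x := by
  obtain ⟨M, hM⟩ := hP
  rw [hM, hM]
  simpa using M.map_smul_univ (fun _ => t) (fun _ => x)

lemma IsHomogPoly.analyticAt {n : ℕ} {P : E → ℂ} (hP : IsHomogPoly n P) (x : E) :
    AnalyticAt ℂ P x := by
  obtain ⟨M, hM⟩ := hP
  obtain rfl : P = fun x => M fun _ => x := funext hM
  have hdiag : AnalyticAt ℂ (fun x : E => fun _ : Fin n => x) x :=
    (ContinuousLinearMap.pi fun _ : Fin n => ContinuousLinearMap.id ℂ E).analyticAt x
  exact AnalyticAt.fun_comp M.analyticAt hdiag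

/-- A homogeneous polynomial is Lipschitz on every ball centred at the origin. -/
lemma IsHomogPoly.exists_lipschitz {n : ℕ} {P : E → ℂ} (hP : IsHomogPoly n P) {r : ℝ}
    (hr : 0 ≤ r) :
    ∃ K > 0, ∀ x y : E, ‖x‖ ≤ r → ‖y‖ ≤ r → ‖P x - P y‖ ≤ K * ‖x - y‖ := by
  obtain ⟨M, hM⟩ := hP
  refine ⟨‖M‖ * n * r ^ (n - 1) + 1, by positivity, fun x y hx hy => ?_⟩
  rw [hM, hM]
  have h := M.norm_image_sub_le (fun _ => x) (fun _ => y)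
  have hx' : ‖fun _ : Fin n => x‖ ≤ r := (pi_norm_const_le x).trans hx
  have hy' : ‖fun _ : Fin n => y‖ ≤ r := (pi_norm_const_le y).trans hy
  have hxy : ‖(fun _ : Fin n => x) - fun _ => y‖ ≤ ‖x - y‖ := pi_norm_const_le (x - y)
  rw [Fintype.card_fin] at h
  calc _ ≤ _ := h
    _ ≤ ‖M‖ * n * r ^ (n - 1) * ‖x - y‖ := by
      gcongr
      exact max_le hx' hy'
    _ ≤ _ := by nlinarith [norm_nonneg (x - y)]

/-- The quantitative estimate, with the distance condition phrased through balls: the multiple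
`t • x` at which `Re P` has dropped to `1 / 2` lies outside `ball x (1 / R)`. -/
lemma half_mul_pow_le_re {n : ℕ} (hn : 1 ≤ n) {P : E → ℂ} (hP : IsHomogPoly n P) {R : ℝ}
    (hR : 1 < R) {x : E} (hx : 1 / 2 < (P x).re) (hxR : ‖x‖ ≤ R)
    (hball : ball x (1 / R) ⊆ {x : E | 1 / 2 < (P x).re}) :
    (1 / 2) * (R ^ 2 / (R ^ 2 - 1)) ^ n ≤ (P x).re := by
  have hp : 0 < (P x).re := by linarith
  have hR2 : 0 < R ^ 2 - 1 := by nlinarith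
  obtain ⟨t, ht0, htn⟩ : ∃ t : ℝ, 0 ≤ t ∧ t ^ n = 1 / (2 * (P x).re) :=
    ⟨(1 / (2 * (P x).re)) ^ ((n : ℝ)⁻¹), by positivity,
      Real.rpow_inv_natCast_pow (by positivity) (by omega)⟩
  have ht1 : t ≤ 1 := by
    rw [← pow_le_one_iff_of_nonneg ht0 (by omega : n ≠ 0), htn, div_le_one (by positivity)]
    linarith
  have hPt : (P ((t : ℂ) • x)).re = 1 / 2 := by
    rw [hP.map_smul, ← Complex.ofReal_pow, Complex.re_ofReal_mul, htn]
    field_simp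
  have hdist : 1 / R ≤ (1 - t) * R := by
    have hout : (t : ℂ) • x ∉ ball x (1 / R) := fun h => (hball h).ne' hPt
    rw [mem_ball, not_lt, dist_eq_norm] at hout
    have heq : (t : ℂ) • x - x = ((t - 1 : ℝ) : ℂ) • x := by
      push_cast
      rw [sub_smul, one_smul]
    rw [heq, norm_smul, Complex.norm_real, Real.norm_eq_abs, abs_of_nonpos (by linarith)] at hout
    calc _ ≤ _ := hout
      _ ≤ (1 - t) * R := by
        rw [neg_sub]
        gcongr
  have hle : R ^ 2 / (R ^ 2 - 1) * t ≤ 1 := by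
    rw [div_le_iff₀ (by linarith)] at hdist
    rw [div_mul_eq_mul_div, div_le_one hR2]
    nlinarith
  have hpow : (R ^ 2 / (R ^ 2 - 1)) ^ n * t ^ n ≤ 1 := by
    rw [← mul_pow]
    exact pow_le_one₀ (by positivity) hle
  rw [htn, mul_one_div, div_le_one (by positivity)] at hpow
  linarith

/-- Restrictions of continuous linear functionals belong to `H_b(U)`. -/
lemma memHb_clm (U : Set E) (f : E →L[ℂ] ℂ) : MemHb U f := by
  refine ⟨fun x _ => f.analyticAt x, fun A hA => ?_⟩
  obtain ⟨r, hr⟩ := hA.2.1.exists_norm_le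
  exact ⟨‖f‖ * r, fun x hx => f.le_opNorm_of_le (hr x hx)⟩

lemma hbConvex_of_homogPoly {n : ℕ} (hn : 1 ≤ n) {P : E → ℂ} (hP : IsHomogPoly n P) :
    HbConvex {x : E | 1 / 2 < (P x).re} := by
  rintro A ⟨hAU, hAbdd, d, hd, hAd⟩
  obtain ⟨r, hr⟩ := hAbdd.exists_norm_le
  -- A single `R` serving both as norm bound and as inverse distance to the complement.
  set R : ℝ := max 2 (max r (1 / d)) with hRdef
  have hR2 : 2 ≤ R := le_max_left _ _
  have hrR : r ≤ R := (le_max_left _ _).trans (le_max_right _ _)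
  have hdR : 1 / R ≤ d := by
    have : 1 / d ≤ R := (le_max_right _ _).trans (le_max_right _ _)
    exact (one_div_le (by linarith) hd).2 this
  obtain ⟨c, hcdef⟩ : ∃ c, c = (1 / 2) * (R ^ 2 / (R ^ 2 - 1)) ^ n := ⟨_, rfl⟩
  have hc : 1 / 2 < c := by
    have h1 : 1 < R ^ 2 / (R ^ 2 - 1) := by
      rw [one_lt_div (by nlinarith)]
      linarith
    have := one_lt_pow₀ h1 (by omega : n ≠ 0)
    linarith
  have hAc : ∀ a ∈ A, c ≤ (P a).re := fun a ha => hcdef ▸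
    half_mul_pow_le_re hn hP (by linarith) (hAU ha) ((hr a ha).trans hrR)
      ((ball_subset_ball hdR).trans (hAd a ha))
  have hexp : MemHb {x : E | 1 / 2 < (P x).re} fun x => Complex.exp (-P x) := by
    refine ⟨fun x _ => (hP.analyticAt x).neg.cexp, fun B hB => ⟨1, fun x hx => ?_⟩⟩
    have h : 1 / 2 < (P x).re := hB.1 hx
    rw [Complex.norm_exp, Complex.neg_re, Real.exp_le_one_iff]
    linarith
  obtain ⟨K, hK, hLip⟩ := hP.exists_lipschitz (r := R + 1) (by linarith)
  have hnorm : ∀ x ∈ {x ∈ {x : E | 1 / 2 < (P x).re} | ∀ f, MemHb {x : E | 1 / 2 < (P x).re} f →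
      ∀ C : ℝ, (∀ a ∈ A, ‖f a‖ ≤ C) → ‖f x‖ ≤ C}, ‖x‖ ≤ R := by
    rintro x ⟨-, hx⟩
    refine NormedSpace.norm_le_dual_bound ℂ x (by linarith) fun f => ?_
    refine hx f (memHb_clm _ f) _ fun a ha => ?_
    rw [mul_comm]
    exact f.le_opNorm_of_le ((hr a ha).trans hrR)
  refine ⟨fun x hx => hx.1, isBounded_iff_forall_norm_le.2 ⟨R, hnorm⟩,
    min 1 ((c - 1 / 2) / K), lt_min one_pos (div_pos (by linarith) hK), ?_⟩
  intro x hx y hy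
  have hcx : c ≤ (P x).re := by
    have h := hx.2 _ hexp (Real.exp (-c)) fun a ha => by
      rw [Complex.norm_exp, Complex.neg_re, Real.exp_le_exp]
      linarith [hAc a ha]
    rw [Complex.norm_exp, Complex.neg_re, Real.exp_le_exp] at h
    linarith
  have hxR := hnorm x hx
  rw [mem_ball', dist_eq_norm, lt_min_iff, lt_div_iff₀ hK] at hy
  have hyR : ‖y‖ ≤ R + 1 := by
    have := norm_le_insert x y
    linarith
  have h1 := hLip x y (by linarith) hyR
  have h2 := Complex.re_le_norm (P x - P y)
  rw [Complex.sub_re] at h2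
  change 1 / 2 < (P y).re
  linarith [hy.2]

/-- For a continuous `n`-homogeneous polynomial `P` (`n ≥ 1`) and
`U = {x : Re P(x) > 1/2}`: (i) if `x ∈ U`, `‖x‖ ≤ R` and `dist(x, E∖U) ≥ 1/R` (`R > 1`) then
`Re P(x) ≥ (1/2)(R²/(R²−1))ⁿ`; (ii) `U` is open and `H_b(U)`-convex. -/
theorem stmt_16 {E : Type*} [NormedAddCommGroup E] [NormedSpace ℂ E] [CompleteSpace E]
    (n : ℕ) (hn : 1 ≤ n) (P : E → ℂ) (hP : IsHomogPoly n P)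
    (U : Set E) (hUdef : U = {x : E | 1 / 2 < (P x).re}) :
    (∀ R : ℝ, 1 < R → ∀ x ∈ U, ‖x‖ ≤ R → 1 / R ≤ Metric.infDist x Uᶜ →
      (1 / 2) * (R ^ 2 / (R ^ 2 - 1)) ^ n ≤ (P x).re) ∧
    IsOpen U ∧ HbConvex U := by
  subst hUdef
  refine ⟨fun R hR x hx hxR hd => half_mul_pow_le_re hn hP hR hx hxR fun y hy => ?_, ?_,
    hbConvex_of_homogPoly hn hP⟩
  · by_contra hyU
    have := infDist_le_dist_of_mem (x := x) (mem_compl hyU)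
    rw [mem_ball'] at hy
    linarith
  · have hcont : Continuous P :=
      continuous_iff_continuousAt.2 fun x => (hP.analyticAt x).continuousAt
    exact isOpen_lt continuous_const (Complex.continuous_re.comp hcont)
end

section
/- Let p ∈ ℕ with p ≥ 2, and let B denote the open unit ball of ℓ_p (complex). Let (x_m)_{m∈ℕ} be a block sequence in B, i.e. there is a strictly increasing sequence (j_m) of naturals such that the k-th coordinate of x_m is 0 unless j_m < k ≤ j_{m+1}, and assume ‖x_m‖ → r with 0 < r < 1. Let z ∈ ℓ_p satisfy ‖z‖^p + r^p > 1. Then there exist δ > 0 and M ∈ ℕ such that for every N ∈ ℕ there is a continuous pN-homogeneous polynomial f_N on ℓ_p with sup_{x∈B}|f_N(x)| ≤ 1 and |f_N(z + x_m)| ≥ (1+δ)^N for every m > M. (Consequently no continuous character of H_b(B) can take as value at every continuous polynomial Q a cluster point of the sequence (Q(z + x_m))_m.) -/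
/-!
For scalars `θ k` in the closed unit disc, `Q w = ∑ θ k * w k ^ p` is a continuous `p`-homogeneous
polynomial on `ℓ_p` with `‖Q w‖ ≤ ‖w‖ ^ p`, coming from a `p`-linear map of norm at most one
(`exists_diagonal`, a generalized Hölder inequality obtained from AM-GM).

Truncate `z` to `z'`, supported on the coordinates `k ≤ j M`. For `m > M` the supports of the
vectors `x m` are disjoint from each other and from that of `z'`, so a single choice of phases `θ`
makes every term of `Q (z' + x m)` nonnegative, simultaneously for all `m > M`
(`exists_phases`); hence `Q (z' + x m) = ‖z'‖ ^ p + ‖x m‖ ^ p`, which is close to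
`‖z‖ ^ p + r ^ p > 1` for large `M`. The Lipschitz bound for multilinear maps is uniform in `θ`, so
replacing `z'` by `z` costs little once `M` is large. The required polynomials are the powers
`Q ^ N`.
-/

open Set Metric

variable {E : Type*} [NormedAddCommGroup E] [NormedSpace ℂ E]

/-! ### Products and powers of homogeneous polynomials -/

section Homogeneous

variable {F : Type*} [NormedAddCommGroup F] [NormedSpace ℂ F]

lemma isHomogPoly_mul {m n : ℕ} {P Q : F → ℂ} (hP : IsHomogPoly m P) (hQ : IsHomogPoly n Q) :
    IsHomogPoly (m + n) (fun w => P w * Q w) := by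
  obtain ⟨A, hA⟩ := hP
  obtain ⟨B, hB⟩ := hQ
  refine ⟨(ContinuousMultilinearMap.mk
    ((LinearMap.mul' ℂ ℂ).compMultilinearMap
      (A.toMultilinearMap.domCoprod B.toMultilinearMap)) ?_).domDomCongr finSumFinEquiv, ?_⟩
  · change Continuous fun v : Fin m ⊕ Fin n → F => A (fun i => v (Sum.inl i)) *
      B (fun i => v (Sum.inr i))
    fun_prop
  · intro w
    change P w * Q w = A (fun _ => w) * B (fun _ => w)
    rw [hA, hB]

lemma isHomogPoly_pow {p : ℕ} {Q : F → ℂ} (hQ : IsHomogPoly p Q) (N : ℕ) :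
    IsHomogPoly (p * N) (fun w => Q w ^ N) := by
  induction N with
  | zero =>
    rw [Nat.mul_zero]
    exact ⟨ContinuousMultilinearMap.constOfIsEmpty ℂ _ 1, fun w => by simp⟩
  | succ N ih =>
    simp only [pow_succ]
    exact isHomogPoly_mul ih hQ

end Homogeneous

/-! ### Diagonal multilinear forms on `ℓ_p` -/

/-- The sequence space `ℓ_p` over `ℂ`, for a natural exponent. -/
noncomputable abbrev SeqLp (p : ℕ) := lp (fun _ : ℕ => ℂ) (p : ENNReal)

section Diagonal

variable {p : ℕ}

lemma hasSum_norm_pow (hp : 0 < p) (w : SeqLp p) :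
    HasSum (fun k => ‖(w : ℕ → ℂ) k‖ ^ p) (‖w‖ ^ p) := by
  have h := lp.hasSum_norm (p := (p : ENNReal)) (by simpa using hp) w
  simpa using h

/-- AM-GM for the `p` numbers `a i`, applied to their `p`-th powers. -/
lemma prod_le_sum_pow (hp : 0 < p) (a : Fin p → ℝ) (ha : ∀ i, 0 ≤ a i) :
    ∏ i, a i ≤ ∑ i, (p : ℝ)⁻¹ * a i ^ p := by
  have hp' : (p : ℝ) ≠ 0 := by positivity
  have h := Real.geom_mean_le_arith_mean_weighted Finset.univ (fun _ : Fin p => (p : ℝ)⁻¹)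
    (fun i => a i ^ p) (fun _ _ => by positivity) (by simp [hp'])
    (fun i _ => pow_nonneg (ha i) p)
  refine le_trans (le_of_eq ?_) h
  exact Finset.prod_congr rfl fun i _ => (Real.pow_rpow_inv_natCast (ha i) hp.ne').symm

/-- Generalized Hölder inequality for `p` sequences in `ℓ_p`. -/
lemma summable_prod_and_tsum_le [Fact (1 ≤ (p : ENNReal))] (hp : 0 < p) (u : Fin p → SeqLp p) :
    Summable (fun k => ∏ i, ‖(u i : ℕ → ℂ) k‖) ∧
      ∑' k, ∏ i, ‖(u i : ℕ → ℂ) k‖ ≤ ∏ i, ‖u i‖ := by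
  by_cases h0 : ∃ i, u i = 0
  · obtain ⟨i, hi⟩ := h0
    have hz : (fun k => ∏ i, ‖(u i : ℕ → ℂ) k‖) = fun _ => 0 := by
      funext k
      exact Finset.prod_eq_zero (Finset.mem_univ i) (by simp [hi])
    rw [hz]
    exact ⟨summable_zero, by simpa using Finset.prod_nonneg fun i _ => norm_nonneg (u i)⟩
  · push Not at h0
    have hpos : ∀ i, 0 < ‖u i‖ := fun i => norm_pos_iff.2 (h0 i)
    have hP : 0 < ∏ i, ‖u i‖ := Finset.prod_pos fun i _ => hpos i
    have hp' : (p : ℝ) ≠ 0 := by positivity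
    have hs : HasSum (fun k => (∏ i, ‖u i‖) *
        ∑ i, (p : ℝ)⁻¹ * (‖(u i : ℕ → ℂ) k‖ / ‖u i‖) ^ p) (∏ i, ‖u i‖) := by
      have h1 : ∀ i ∈ (Finset.univ : Finset (Fin p)),
          HasSum (fun k => (p : ℝ)⁻¹ * (‖(u i : ℕ → ℂ) k‖ / ‖u i‖) ^ p) (p : ℝ)⁻¹ := by
        intro i _
        have h := ((hasSum_norm_pow hp (u i)).div_const (‖u i‖ ^ p)).mul_left (p : ℝ)⁻¹
        rw [div_self (pow_pos (hpos i) p).ne', mul_one] at h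
        simpa only [div_pow] using h
      have h2 := (hasSum_sum h1).mul_left (∏ i, ‖u i‖)
      simpa [hp'] using h2
    have hle : ∀ k, ∏ i, ‖(u i : ℕ → ℂ) k‖ ≤
        (∏ i, ‖u i‖) * ∑ i, (p : ℝ)⁻¹ * (‖(u i : ℕ → ℂ) k‖ / ‖u i‖) ^ p := by
      intro k
      have h := prod_le_sum_pow hp (fun i => ‖(u i : ℕ → ℂ) k‖ / ‖u i‖) (fun i => by positivity)
      rw [Finset.prod_div_distrib, div_le_iff₀' hP] at h
      exact h
    have hsum : Summable (fun k => ∏ i, ‖(u i : ℕ → ℂ) k‖) :=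
      hs.summable.of_nonneg_of_le (fun k => Finset.prod_nonneg fun i _ => norm_nonneg _) hle
    exact ⟨hsum, (hsum.tsum_le_tsum hle hs.summable).trans_eq hs.tsum_eq⟩

/-- The product of the `k`-th coordinates, as a `p`-linear form on `ℓ_p`. -/
noncomputable def coordProd (p k : ℕ) : MultilinearMap ℂ (fun _ : Fin p => SeqLp p) ℂ :=
  (MultilinearMap.mkPiAlgebra ℂ (Fin p) ℂ).compLinearMap fun _ =>
    { toFun := fun w => (w : ℕ → ℂ) k
      map_add' := fun _ _ => rfl
      map_smul' := fun _ _ => rfl }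

lemma coordProd_apply (k : ℕ) (u : Fin p → SeqLp p) :
    coordProd p k u = ∏ i, (u i : ℕ → ℂ) k := rfl

/-- The diagonal `p`-linear form with coefficients `θ` in the closed unit disc has norm at
most one. -/
lemma exists_diagonal [Fact (1 ≤ (p : ENNReal))] (hp : 0 < p) (θ : ℕ → ℂ)
    (hθ : ∀ k, ‖θ k‖ ≤ 1) :
    ∃ A : ContinuousMultilinearMap ℂ (fun _ : Fin p => SeqLp p) ℂ, ‖A‖ ≤ 1 ∧
      ∀ w : SeqLp p, A (fun _ => w) = ∑' k, θ k * (w : ℕ → ℂ) k ^ p := by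
  have hle : ∀ (u : Fin p → SeqLp p) k,
      ‖θ k * coordProd p k u‖ ≤ ∏ i, ‖(u i : ℕ → ℂ) k‖ := by
    intro u k
    rw [coordProd_apply, norm_mul, norm_prod]
    exact mul_le_of_le_one_left (Finset.prod_nonneg fun i _ => norm_nonneg _) (hθ k)
  have hsn : ∀ u : Fin p → SeqLp p, Summable fun k => ‖θ k * coordProd p k u‖ := fun u =>
    (summable_prod_and_tsum_le hp u).1.of_nonneg_of_le (fun k => norm_nonneg _) (hle u)
  have hs : ∀ u : Fin p → SeqLp p, Summable fun k => θ k * coordProd p k u := fun u =>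
    (hsn u).of_norm
  let A₀ : MultilinearMap ℂ (fun _ : Fin p => SeqLp p) ℂ :=
    { toFun := fun u => ∑' k, θ k * coordProd p k u
      map_update_add' := by
        intro _ u i a b
        rw [← (hs _).tsum_add (hs _)]
        simp only [MultilinearMap.map_update_add, mul_add]
      map_update_smul' := by
        intro _ u i c a
        rw [smul_eq_mul, ← tsum_mul_left]
        simp only [MultilinearMap.map_update_smul, smul_eq_mul, mul_left_comm] }
  have hb : ∀ u, ‖A₀ u‖ ≤ 1 * ∏ i, ‖u i‖ := by
    intro u
    rw [one_mul]
    have h := summable_prod_and_tsum_le hp u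
    exact (norm_tsum_le_tsum_norm (hsn u)).trans
      (((hsn u).tsum_le_tsum (hle u) h.1).trans h.2)
  refine ⟨A₀.mkContinuous 1 hb, A₀.mkContinuous_norm_le zero_le_one hb, fun w => ?_⟩
  change ∑' k, θ k * coordProd p k (fun _ => w) = _
  simp [coordProd_apply]

end Diagonal

/-! ### Simultaneous choice of phases -/

/-- The scalar `conj (a ^ p) / ‖a‖ ^ p` rotates `a ^ p` to `‖a‖ ^ p`; for `a = 0` it is `0` by
the convention on division. -/
lemma exists_phase {p : ℕ} (hp : p ≠ 0) (a : ℂ) :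
    ∃ c : ℂ, ‖c‖ ≤ 1 ∧ c * a ^ p = ((‖a‖ ^ p : ℝ) : ℂ) := by
  rcases eq_or_ne a 0 with rfl | ha
  · exact ⟨0, by simp, by simp [hp]⟩
  · have hn : ((‖a‖ : ℝ) : ℂ) ≠ 0 := by simpa using ha
    refine ⟨(starRingEnd ℂ a / ‖a‖) ^ p, by simp [ha], ?_⟩
    rw [← mul_pow, div_mul_eq_mul_div, Complex.conj_mul', sq, mul_div_assoc, div_self hn, mul_one]
    push_cast
    rfl

/-- For vectors with pairwise disjoint supports, all disjoint from the support of `a`, one choice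
of phases works for every `a + y m`. -/
lemma exists_phases {p : ℕ} (hp : p ≠ 0) (a : ℕ → ℂ) (y : ℕ → ℕ → ℂ) (S : Set ℕ)
    (hay : ∀ m ∈ S, ∀ k, a k = 0 ∨ y m k = 0)
    (hyy : ∀ m ∈ S, ∀ m' ∈ S, m ≠ m' → ∀ k, y m k = 0 ∨ y m' k = 0) :
    ∃ θ : ℕ → ℂ, (∀ k, ‖θ k‖ ≤ 1) ∧
      ∀ m ∈ S, ∀ k, θ k * (a k + y m k) ^ p = ((‖a k‖ ^ p + ‖y m k‖ ^ p : ℝ) : ℂ) := by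
  have key : ∀ k, ∃ c : ℂ, ‖c‖ ≤ 1 ∧
      ∀ m ∈ S, c * (a k + y m k) ^ p = ((‖a k‖ ^ p + ‖y m k‖ ^ p : ℝ) : ℂ) := by
    intro k
    by_cases ha : a k = 0
    · by_cases hy : ∃ m ∈ S, y m k ≠ 0
      · obtain ⟨m₀, hm₀, hne⟩ := hy
        obtain ⟨c, hc, hc'⟩ := exists_phase hp (y m₀ k)
        refine ⟨c, hc, fun m hm => ?_⟩
        by_cases hmm : m = m₀
        · subst hmm
          simpa [ha, hp] using hc'
        · have h0 : y m k = 0 := (hyy m hm m₀ hm₀ hmm k).resolve_right hne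
          simp [ha, h0, hp]
      · push Not at hy
        exact ⟨0, by simp, fun m hm => by simp [ha, hy m hm, hp]⟩
    · obtain ⟨c, hc, hc'⟩ := exists_phase hp (a k)
      refine ⟨c, hc, fun m hm => ?_⟩
      have h0 : y m k = 0 := (hay m hm k).resolve_left ha
      simpa [h0, hp] using hc'
  choose θ h1 h2 using key
  exact ⟨θ, h1, fun m hm k => h2 k m hm⟩

/-! ### Truncation and the main estimate -/

/-- Finitely many coordinates approximate a vector of `ℓ_p`. -/
lemma exists_truncation {p : ℕ} [Fact (1 ≤ (p : ENNReal))] (z : SeqLp p) :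
    ∃ t : ℕ → SeqLp p, Filter.Tendsto t Filter.atTop (nhds z) ∧
      ∀ n k, n ≤ k → (t n : ℕ → ℂ) k = 0 := by
  refine ⟨fun n => ∑ i ∈ Finset.range n, lp.single (p : ENNReal) i ((z : ℕ → ℂ) i),
    (lp.hasSum_single (ENNReal.natCast_ne_top p) z).tendsto_sum_nat, fun n k hnk => ?_⟩
  rw [lp.coeFn_sum, Finset.sum_apply]
  refine Finset.sum_eq_zero fun i hi => lp.single_apply_ne _ _ _ ?_
  have := Finset.mem_range.1 hi
  omega

/-- In `ℓ_p` (`p ∈ ℕ`, `p ≥ 2`), given a block sequence `(x_m)` in the open unit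
ball with `‖x_m‖ → r ∈ (0,1)` and `z` with `‖z‖^p + r^p > 1`, there are `δ > 0` and `M` such
that for every `N` there is a continuous `pN`-homogeneous polynomial `f_N`, of sup norm at
most `1` on the open unit ball, with `|f_N(z + x_m)| ≥ (1+δ)^N` for all `m > M`. -/
theorem stmt_18 (p : ℕ) (hp : 2 ≤ p) [Fact (1 ≤ (p : ENNReal))]
    (x : ℕ → lp (fun _ : ℕ => ℂ) (p : ENNReal))
    (hxball : ∀ m, ‖x m‖ < 1)
    (j : ℕ → ℕ) (hj : StrictMono j)
    (hblock : ∀ m k, (k ≤ j m ∨ j (m + 1) < k) → (x m : ∀ _ : ℕ, ℂ) k = 0)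
    (r : ℝ) (hr0 : 0 < r) (hr1 : r < 1)
    (hlim : Filter.Tendsto (fun m => ‖x m‖) Filter.atTop (nhds r))
    (z : lp (fun _ : ℕ => ℂ) (p : ENNReal)) (hz : 1 < ‖z‖ ^ p + r ^ p) :
    ∃ δ > (0 : ℝ), ∃ M : ℕ, ∀ N : ℕ,
      ∃ f : lp (fun _ : ℕ => ℂ) (p : ENNReal) → ℂ,
        IsHomogPoly (p * N) f ∧ (∀ w, ‖w‖ < 1 → ‖f w‖ ≤ 1) ∧
        ∀ m, M < m → (1 + δ) ^ N ≤ ‖f (z + x m)‖ := by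
  have hp0 : 0 < p := by omega
  -- The excess `‖z‖ ^ p + r ^ p - 1` is `3 δ`: one `δ` is kept, one is spent on the limits
  -- and one on the truncation.
  obtain ⟨δ, hδ, hδz⟩ : ∃ δ > (0 : ℝ), 1 + 3 * δ = ‖z‖ ^ p + r ^ p :=
    ⟨(‖z‖ ^ p + r ^ p - 1) / 3, by linarith, by ring⟩
  obtain ⟨t, ht, ht0⟩ := exists_truncation z
  have hidx : Filter.Tendsto (fun M => j M + 1) Filter.atTop Filter.atTop :=
    (Filter.tendsto_add_atTop_nat 1).comp hj.tendsto_atTop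
  have htj : Filter.Tendsto (fun M => t (j M + 1)) Filter.atTop (nhds z) := ht.comp hidx
  have e1 : ∀ᶠ M in Filter.atTop, ‖z‖ ^ p - δ / 2 < ‖t (j M + 1)‖ ^ p :=
    (htj.norm.pow p).eventually (lt_mem_nhds (by linarith))
  have e2 : ∀ᶠ M in Filter.atTop, ‖t (j M + 1)‖ < ‖z‖ + 1 :=
    htj.norm.eventually (gt_mem_nhds (by linarith))
  have e3 : ∀ᶠ M in Filter.atTop,
      p * (‖z‖ + 2) ^ (p - 1) * ‖t (j M + 1) - z‖ < δ := by
    have h := ((htj.sub_const z).norm).const_mul ((p : ℝ) * (‖z‖ + 2) ^ (p - 1))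
    rw [sub_self, norm_zero, mul_zero] at h
    exact h.eventually (gt_mem_nhds hδ)
  have e4 : ∀ᶠ M in Filter.atTop, ∀ m, M ≤ m → r ^ p - δ / 2 < ‖x m‖ ^ p :=
    Filter.eventually_forall_ge_atTop.2
      ((hlim.pow p).eventually (lt_mem_nhds (by linarith)))
  obtain ⟨M, h1, h2, h3, h4⟩ := (e1.and (e2.and (e3.and e4))).exists
  set z' := t (j M + 1) with hz'
  have hzx : ∀ m ∈ Ioi M, ∀ k, (z' : ℕ → ℂ) k = 0 ∨ (x m : ℕ → ℂ) k = 0 := by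
    intro m hm k
    rcases Nat.lt_or_ge (j M) k with hk | hk
    · exact Or.inl (ht0 _ _ hk)
    · exact Or.inr (hblock m k (Or.inl (hk.trans (hj.monotone (le_of_lt hm)))))
  have hlt : ∀ m m' k, m < m' → (x m : ℕ → ℂ) k = 0 ∨ (x m' : ℕ → ℂ) k = 0 := by
    intro m m' k hmm
    rcases Nat.lt_or_ge (j (m + 1)) k with hk | hk
    · exact Or.inl (hblock m k (Or.inr hk))
    · exact Or.inr (hblock m' k (Or.inl (hk.trans (hj.monotone hmm))))
  have hxx : ∀ m ∈ Ioi M, ∀ m' ∈ Ioi M, m ≠ m' →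
      ∀ k, (x m : ℕ → ℂ) k = 0 ∨ (x m' : ℕ → ℂ) k = 0 := by
    intro m _ m' _ hmm k
    rcases lt_or_gt_of_ne hmm with h | h
    · exact hlt m m' k h
    · exact (hlt m' m k h).symm
  obtain ⟨θ, hθ, hθv⟩ := exists_phases hp0.ne' (z' : ℕ → ℂ) (fun m => (x m : ℕ → ℂ)) (Ioi M)
    hzx hxx
  obtain ⟨A, hA, hAv⟩ := exists_diagonal hp0 θ hθ
  have hval : ∀ m, M < m → ‖A (fun _ => z' + x m)‖ = ‖z'‖ ^ p + ‖x m‖ ^ p := by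
    intro m hm
    have hs := (hasSum_norm_pow hp0 z').add (hasSum_norm_pow hp0 (x m))
    have : A (fun _ => z' + x m) = ((‖z'‖ ^ p + ‖x m‖ ^ p : ℝ) : ℂ) := by
      rw [hAv, ← (Complex.hasSum_ofReal.2 hs).tsum_eq]
      exact tsum_congr fun k => hθv m hm k
    rw [this, Complex.norm_real, Real.norm_of_nonneg (by positivity)]
  have hlow : ∀ m, M < m → 1 + δ ≤ ‖A (fun _ => z + x m)‖ := by
    intro m hm
    have hsub := A.norm_image_sub_le (fun _ => z' + x m) (fun _ => z + x m)
    have : Nonempty (Fin p) := ⟨⟨0, hp0⟩⟩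
    have hd : (fun _ : Fin p => z' + x m) - (fun _ => z + x m) = fun _ => z' - z := by
      funext i
      simp
    rw [hd, pi_norm_const, pi_norm_const, pi_norm_const, Fintype.card_fin] at hsub
    -- Both points have norm at most `‖z‖ + 2`, whatever `m` and `θ` are.
    have hmax : max ‖z' + x m‖ ‖z + x m‖ ≤ ‖z‖ + 2 := by
      have := hxball m
      refine max_le ((norm_add_le _ _).trans ?_) ((norm_add_le _ _).trans ?_) <;> linarith
    have hbd : ‖A‖ * p * max ‖z' + x m‖ ‖z + x m‖ ^ (p - 1) * ‖z' - z‖ ≤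
        1 * p * (‖z‖ + 2) ^ (p - 1) * ‖z' - z‖ := by
      gcongr
    have htri := norm_sub_norm_le (A fun _ => z' + x m) (A fun _ => z + x m)
    have hx4 := h4 m hm.le
    rw [hval m hm] at htri
    rw [one_mul] at hbd
    linarith
  refine ⟨δ, hδ, M, fun N => ⟨fun w => A (fun _ => w) ^ N,
    isHomogPoly_pow ⟨A, fun _ => rfl⟩ N, fun w hw => ?_, fun m hm => ?_⟩⟩
  · have hw1 : ‖A fun _ => w‖ ≤ 1 := by
      refine (A.le_opNorm _).trans ?_
      rw [Finset.prod_const]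
      exact mul_le_one₀ hA (by positivity) (pow_le_one₀ (norm_nonneg w) hw.le)
    rw [norm_pow]
    exact pow_le_one₀ (norm_nonneg _) hw1
  · rw [norm_pow]
    exact pow_le_pow_left₀ (by positivity) (hlow m hm) N
end

section
/- Let E be a complex Banach space, and let U ⊆ V ⊆ E be open sets with U nonempty and connected and V connected. Suppose that every f ∈ H_b(U) admits a holomorphic extension f̃ : V → ℂ (which is unique, since V is connected and U is open and nonempty). Then for every z ∈ V the evaluation f ↦ f̃(z) is a continuous character of H_b(U): there exists a U-bounded set B (depending on z) such that |f̃(z)| ≤ sup_{x∈B}|f(x)| for every f ∈ H_b(U). -/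
/-!
The statement is a uniform boundedness principle: the evaluation of extensions at `z` has to be
dominated by the supremum over a single set `U_n = UNat U n`.

Suppose it is not. Then there are `f n ∈ H_b(U)` with `|f n| ≤ 1` on `U_(n+1)` while the
extensions `g n` satisfy `|g n z| > n`. Every `U`-bounded set lies in all but finitely many `U_n`,
so the `f n` are uniformly bounded on each `U`-bounded set, and for each `a ∈ ℓ¹` the series
`∑ a n • f n` is a function in `H_b(U)` (`memHb_tsum`). Let `T a` be its extension to `V`. For
`y ∈ U` the functional `a ↦ T a y` is continuous on `ℓ¹`; this continuity spreads to all of `V`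
(`IsCLF.propagate`), so that `g n z = T (e n) z` is bounded in `n`: a contradiction.

Continuity spreads by Banach–Steinhaus on `ℓ¹`, in the form: pointwise limits of continuous linear
functionals are continuous and linear. If `a ↦ T a y` is continuous for `y` near `w`, then so are
the directional derivatives `a ↦ (d/dt)^k T a (w + t • h)` at `t = 0`, being iterated limits of
difference quotients, and hence so is `a ↦ T a (w + h)`, the limit of the Taylor polynomials along
the line, as long as `w + h` lies in a ball around `w` contained in `V`. The interior of the set of
good points is therefore relatively closed in `V`.

This gives `|f̃(z)| ≤ n * sup_B |f|` for some `n` and `B`; applying it to powers of `f` and taking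
`k`-th roots removes the constant, which is where multiplicativity enters.

That `∑ a n • f n` is analytic on the Banach space `E` (`analyticAt_tsum`) follows by summing Taylor
series, using Cauchy estimates for `iteratedFDeriv` to control the norms of the coefficients.
-/

open Set Metric

variable {E : Type*} [NormedAddCommGroup E] [NormedSpace ℂ E]

open Filter Topology

/-! ### Normally convergent series of analytic functions -/

/-- The Cauchy estimate for iterated Fréchet derivatives: each derivative costs a shrinking of the
radius by `s` and, by the Schwarz lemma, a factor `2 / s`. -/
theorem norm_iteratedFDeriv_le_of_ball {f : E → ℂ} {x : E} {r M s : ℝ} (hs : 0 < s)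
    (hf : AnalyticOnNhd ℂ f (ball x r)) (hM : ∀ y ∈ ball x r, ‖f y‖ ≤ M) (j : ℕ) :
    ∀ y ∈ ball x (r - j * s), ‖iteratedFDeriv ℂ j f y‖ ≤ M * (2 / s) ^ j := by
  induction j with
  | zero => intro y hy; simpa using hM y (by simpa using hy)
  | succ j ih =>
    intro y hy
    have hsub : ball y s ⊆ ball x (r - j * s) := by
      apply ball_subset_ball'
      have := mem_ball.mp hy
      push_cast at this
      linarith
    have hsub' : ball x (r - j * s) ⊆ ball x r :=
      ball_subset_ball (by nlinarith [j.cast_nonneg (α := ℝ)])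
    rw [← norm_fderiv_iteratedFDeriv]
    have h := Complex.norm_fderiv_le_div_of_mapsTo_ball (f := iteratedFDeriv ℂ j f) (c := y)
      (R₁ := s) (R₂ := 2 * (M * (2 / s) ^ j)) (fun w hw =>
        ((hf.iteratedFDeriv j) w (hsub' (hsub hw))).differentiableAt.differentiableWithinAt)
      (fun w hw => by
        rw [mem_closedBall, dist_eq_norm]
        have h1 := ih w (hsub hw)
        have h2 := ih y (hsub (mem_ball_self hs))
        have h3 := norm_sub_le (iteratedFDeriv ℂ j f w) (iteratedFDeriv ℂ j f y)
        linarith) hs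
    refine h.trans_eq ?_
    rw [pow_succ]; ring

/-- Geometric bound on the Taylor coefficients at the centre, with constants that depend on `f` only
through its bound `M`. -/
theorem norm_taylorCoeff_le {f : E → ℂ} {x : E} {r M : ℝ} (hr : 0 < r)
    (hf : AnalyticOnNhd ℂ f (ball x r)) (hM : ∀ y ∈ ball x r, ‖f y‖ ≤ M) (k : ℕ) :
    ‖((k.factorial : ℂ))⁻¹ • iteratedFDeriv ℂ k f x‖ ≤
      (M * Real.exp 1) * (2 * Real.exp 1 / r) ^ k := by
  have hM0 : 0 ≤ M := (norm_nonneg _).trans (hM x (mem_ball_self hr))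
  have hk : (0 : ℝ) < k + 1 := by positivity
  -- `k` steps of length `r / (k + 1)` stay inside the ball; `(k + 1) ^ k / k!` is at most `e ^ (k + 1)`
  have h := norm_iteratedFDeriv_le_of_ball (s := r / (k + 1)) (by positivity) hf hM k x
    (mem_ball_self (by
      have : r - k * (r / (k + 1)) = r / (k + 1) := by field_simp; ring
      rw [this]; positivity))
  have hfac : ((k : ℝ) + 1) ^ k / k.factorial ≤ Real.exp 1 * Real.exp 1 ^ k := by
    have := Real.pow_div_factorial_le_exp (x := (k : ℝ) + 1) hk.le k
    rwa [Real.exp_add, show Real.exp (k : ℝ) = Real.exp 1 ^ k by rw [← Real.exp_nat_mul, mul_one],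
      mul_comm] at this
  rw [norm_smul, norm_inv, Complex.norm_natCast]
  calc ((k.factorial : ℝ))⁻¹ * ‖iteratedFDeriv ℂ k f x‖
      ≤ ((k.factorial : ℝ))⁻¹ * (M * (2 / (r / (k + 1))) ^ k) := by gcongr
    _ = M * (2 / r) ^ k * (((k : ℝ) + 1) ^ k / k.factorial) := by
      have : 2 / (r / ((k : ℝ) + 1)) = (2 / r) * (k + 1) := by field_simp
      rw [this, mul_pow]; ring
    _ ≤ M * (2 / r) ^ k * (Real.exp 1 * Real.exp 1 ^ k) := by gcongr
    _ = _ := by rw [mul_div_right_comm, mul_pow]; ring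

theorem iteratedDeriv_line {f : E → ℂ} {x : E} (hf : AnalyticAt ℂ f x) (h : E) (k : ℕ) :
    iteratedDeriv k (fun t : ℂ => f (x + t • h)) 0 = iteratedFDeriv ℂ k f x fun _ => h := by
  obtain ⟨p, r, hp⟩ := hf
  let u : ℂ →L[ℂ] E := ContinuousLinearMap.toSpanSingleton ℂ h
  have h1 : HasFPowerSeriesOnBall (fun y => f (y + x)) p (u 0) r := by
    have := hp.comp_sub (-x)
    simpa using this
  have h2 := h1.compContinuousLinearMap
  have h3 := h2.factorial_smul 1 k
  have h4 := hp.factorial_smul h k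
  rw [iteratedDeriv_eq_iteratedFDeriv, ← h4]
  have h5 : (fun y => f (y + x)) ∘ u = fun t : ℂ => f (x + t • h) := by
    ext t; simp [u, add_comm]
  rw [h5] at h3
  rw [← h3, FormalMultilinearSeries.compContinuousLinearMap_apply]
  simp [u, Function.comp_def]

theorem analyticOnNhd_line {f : E → ℂ} {x h : E} {r ρ : ℝ} (hf : AnalyticOnNhd ℂ f (ball x r))
    (hρ : ρ * ‖h‖ ≤ r) (hr : 0 < r) :
    AnalyticOnNhd ℂ (fun t : ℂ => f (x + t • h)) (ball 0 ρ) := by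
  intro t ht
  have : x + t • h ∈ ball x r := by
    rw [mem_ball_iff_norm, add_sub_cancel_left, norm_smul]
    rw [mem_ball_zero_iff] at ht
    rcases eq_or_ne h 0 with rfl | h0
    · simpa using hr
    · exact (mul_lt_mul_of_pos_right ht (norm_pos_iff.mpr h0)).trans_le hρ
  exact (hf _ this).fun_comp (f := fun t : ℂ => x + t • h) (by fun_prop)

theorem exists_dilation {a r : ℝ} (ha : 0 ≤ a) (har : a < r) : ∃ ρ : ℝ, 1 < ρ ∧ ρ * a ≤ r := by
  refine ⟨2 * r / (r + a), ?_, ?_⟩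
  · rw [lt_div_iff₀ (by linarith)]; linarith
  · rw [div_mul_eq_mul_div, div_le_iff₀ (by linarith)]; nlinarith

/-- The Taylor series along a complex line converges on the whole ball of analyticity, which may
be larger than the ball of convergence of the power series in `E`. -/
theorem hasSum_taylor_line {f : E → ℂ} {x h : E} {r : ℝ} (hf : AnalyticOnNhd ℂ f (ball x r))
    (hh : ‖h‖ < r) :
    HasSum (fun k : ℕ => (k.factorial : ℂ)⁻¹ * iteratedDeriv k (fun t : ℂ => f (x + t • h)) 0)
      (f (x + h)) := by
  obtain ⟨ρ, h1, h2⟩ := exists_dilation (norm_nonneg h) hh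
  have := Complex.hasSum_taylorSeries_on_ball
    (analyticOnNhd_line hf h2 ((norm_nonneg _).trans_lt hh)).differentiableOn
    (z := 1) (by simpa using h1)
  simpa using this

/-- A normally convergent series of holomorphic functions on a ball of a normed space is
holomorphic at the centre. -/
theorem analyticAt_tsum {u : ℕ → E → ℂ} {x : E} {r : ℝ} (hr : 0 < r) {M : ℕ → ℝ}
    (hM : Summable M) (hu : ∀ n, AnalyticOnNhd ℂ (u n) (ball x r))
    (hb : ∀ n, ∀ y ∈ ball x r, ‖u n y‖ ≤ M n) :
    AnalyticAt ℂ (fun y => ∑' n, u n y) x := by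
  have hM0 : ∀ n, 0 ≤ M n := fun n => (norm_nonneg _).trans (hb n x (mem_ball_self hr))
  set q : ℝ := 2 * Real.exp 1 / r with hq
  have hq0 : 0 < q := by positivity
  let c : ℕ → FormalMultilinearSeries ℂ E ℂ := fun n k =>
    ((k.factorial : ℂ))⁻¹ • iteratedFDeriv ℂ k (u n) x
  have hc : ∀ n k, ‖c n k‖ ≤ (M n * Real.exp 1) * q ^ k := fun n k =>
    norm_taylorCoeff_le hr (hu n) (hb n) k
  have hMs : ∀ k, Summable fun n => (M n * Real.exp 1) * q ^ k := fun k =>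
    (hM.mul_right _).mul_right _
  have hcs : ∀ k, Summable fun n => c n k := fun k =>
    Summable.of_norm_bounded (hMs k) fun n => hc n k
  let p : FormalMultilinearSeries ℂ E ℂ := fun k => ∑' n, c n k
  have hp : ∀ k, ‖p k‖ ≤ ((∑' n, M n) * Real.exp 1) * q ^ k := fun k => by
    have := tsum_of_norm_bounded (hMs k).hasSum fun n => hc n k
    rwa [tsum_mul_right, tsum_mul_right] at this
  -- on the ball of radius `1 / (2 * q)` the double series is dominated by `M n * e * (1 / 2) ^ k`
  let ρ : NNReal := ⟨(2 * q)⁻¹, by positivity⟩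
  have hρ : (ρ : ℝ) = (2 * q)⁻¹ := rfl
  have hρ0 : 0 < ρ := by rw [← NNReal.coe_pos, hρ]; positivity
  have hqρ : q * ρ = 1 / 2 := by rw [hρ]; field_simp
  have hρr : (ρ : ℝ) ≤ r := by
    rw [hρ, inv_le_comm₀ (by positivity) hr, hq, ← one_div, mul_div_assoc']
    gcongr
    nlinarith [Real.add_one_le_exp 1]
  have hS : 0 ≤ ∑' n, M n := tsum_nonneg hM0
  refine ⟨p, ρ, ?_, by exact_mod_cast hρ0, ?_⟩
  · refine p.le_radius_of_bound ((∑' n, M n) * Real.exp 1) fun k => ?_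
    calc ‖p k‖ * (ρ : ℝ) ^ k ≤ ((∑' n, M n) * Real.exp 1) * q ^ k * (ρ : ℝ) ^ k := by
          gcongr; exact hp k
      _ = ((∑' n, M n) * Real.exp 1) * (1 / 2) ^ k := by rw [mul_assoc, ← mul_pow, hqρ]
      _ ≤ ((∑' n, M n) * Real.exp 1) * 1 := by
          gcongr; exact pow_le_one₀ (by norm_num) (by norm_num)
      _ = _ := mul_one _
  · intro h hh
    rw [Metric.eball_coe, mem_ball_zero_iff] at hh
    have hterm : ∀ n k, ‖c n k fun _ => h‖ ≤ (M n * Real.exp 1) * (1 / 2) ^ k := fun n k => by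
      calc ‖c n k fun _ => h‖ ≤ ‖c n k‖ * ‖h‖ ^ k := by
            simpa using (c n k).le_opNorm fun _ => h
        _ ≤ (M n * Real.exp 1) * q ^ k * (ρ : ℝ) ^ k := by
            gcongr
            · have := hM0 n; positivity
            · exact hc n k
        _ = _ := by rw [mul_assoc, ← mul_pow, hqρ]
    have hsum : Summable fun z : ℕ × ℕ => c z.2 z.1 fun _ => h := by
      refine Summable.of_norm_bounded
        (g := fun z : ℕ × ℕ => (1 / 2 : ℝ) ^ z.1 * (M z.2 * Real.exp 1)) ?_ fun z => ?_
      · exact Summable.mul_of_nonneg summable_geometric_two (hM.mul_right _)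
          (fun k => by positivity) fun n => mul_nonneg (hM0 n) (Real.exp_pos _).le
      · rw [mul_comm]; exact hterm z.2 z.1
    have hrow : ∀ k, HasSum (fun n => c n k fun _ => h) (p k fun _ => h) := fun k =>
      (hcs k).hasSum.mapL (ContinuousMultilinearMap.apply ℂ (fun _ : Fin k => E) ℂ fun _ => h)
    have hcol : ∀ n, HasSum (fun k => c n k fun _ => h) (u n (x + h)) := fun n => by
      have := hasSum_taylor_line (hu n) (hh.trans_le hρr)
      simp_rw [iteratedDeriv_line (hu n x (mem_ball_self hr)) h] at this
      exact this
    have h1 := hsum.hasSum.prod_fiberwise (fun k => hrow k)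
    have h2 : HasSum (fun n => u n (x + h)) _ :=
      ((Equiv.prodComm ℕ ℕ).hasSum_iff.mpr hsum.hasSum).prod_fiberwise (fun n => hcol n)
    rw [h2.tsum_eq]
    exact h1

/-! ### Propagation of continuity -/

section Propagation

variable {X : Type*} [NormedAddCommGroup X] [NormedSpace ℂ X]

/-- `ψ` is (the underlying function of) a continuous linear functional. -/
def IsCLF (ψ : X → ℂ) : Prop := ∃ L : X →L[ℂ] ℂ, ∀ a, L a = ψ a

theorem IsCLF.sum {ι : Type*} {s : Finset ι} {c : ι → ℂ} {ψ : ι → X → ℂ}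
    (h : ∀ i ∈ s, IsCLF (ψ i)) : IsCLF fun a => ∑ i ∈ s, c i * ψ i a := by
  choose! L hL using h
  refine ⟨∑ i ∈ s, c i • L i, fun a => ?_⟩
  rw [_root_.sum_apply]
  exact Finset.sum_congr rfl fun i hi => by simp [hL i hi]

/-- Banach–Steinhaus: a pointwise limit of continuous linear functionals is one. -/
theorem IsCLF.of_tendsto [CompleteSpace X] {α : Type*} {l : Filter α} [l.NeBot]
    [l.IsCountablyGenerated] {φ : α → X → ℂ} {ψ : X → ℂ} (h : ∀ᶠ t in l, IsCLF (φ t))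
    (hlim : ∀ a, Tendsto (fun t => φ t a) l (𝓝 (ψ a))) : IsCLF ψ := by
  classical
  let g : α → X →L[ℂ] ℂ := fun t => if ht : IsCLF (φ t) then ht.choose else 0
  have hg : Tendsto (fun t a => g t a) l (𝓝 ψ) := by
    rw [tendsto_pi_nhds]
    intro a
    refine (hlim a).congr' ?_
    filter_upwards [h] with t ht
    simp only [g, dif_pos ht]
    exact (ht.choose_spec a).symm
  exact ⟨continuousLinearMapOfTendsto g hg, fun a => rfl⟩

theorem IsCLF.iterDeriv [CompleteSpace X] {G : X → ℂ → ℂ} {D : Set ℂ} (hD : IsOpen D)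
    (hG : ∀ a, AnalyticOnNhd ℂ (G a) D) (h : ∀ t ∈ D, IsCLF fun a => G a t) (k : ℕ) :
    ∀ t ∈ D, IsCLF fun a => iteratedDeriv k (G a) t := by
  induction k with
  | zero => simpa using h
  | succ k ih =>
    intro t ht
    have hdiff : ∀ a, HasDerivAt (iteratedDeriv k (G a))
        (iteratedDeriv (k + 1) (G a) t) t := fun a => by
      rw [iteratedDeriv_succ]
      have : AnalyticAt ℂ (iteratedDeriv k (G a)) t := by
        rw [iteratedDeriv_eq_iterate]
        exact (hG a).iterated_deriv k t ht
      exact this.differentiableAt.hasDerivAt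
    refine IsCLF.of_tendsto (l := 𝓝[≠] (0 : ℂ)) (φ := fun s a => s⁻¹ •
      (iteratedDeriv k (G a) (t + s) - iteratedDeriv k (G a) t)) ?_
      fun a => (hdiff a).tendsto_slope_zero
    have hmem : ∀ᶠ s in 𝓝[≠] (0 : ℂ), t + s ∈ D := by
      apply Filter.Eventually.filter_mono nhdsWithin_le_nhds
      have : Tendsto (fun s : ℂ => t + s) (𝓝 0) (𝓝 t) :=
        (Continuous.tendsto' (by fun_prop) _ _ (by simp))
      exact this.eventually (hD.mem_nhds ht)
    filter_upwards [hmem] with s hs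
    obtain ⟨L₁, h₁⟩ := ih _ hs
    obtain ⟨L₂, h₂⟩ := ih _ ht
    exact ⟨s⁻¹ • (L₁ - L₂), fun a => by simp [h₁, h₂]⟩

/-- If `a ↦ T a y` is a continuous linear functional for `y` near the centre of a ball on which all
`T a` are analytic, then it is one for all `y` in that ball. -/
theorem IsCLF.of_ball [CompleteSpace X] {T : X → E → ℂ} {w z : E} {R δ : ℝ} (hδ : 0 < δ)
    (hT : ∀ a, AnalyticOnNhd ℂ (T a) (ball w R)) (hw : ∀ y ∈ ball w δ, IsCLF fun a => T a y)
    (hz : z ∈ ball w R) : IsCLF fun a => T a z := by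
  set h : E := z - w
  have hh : ‖h‖ < R := by rwa [← mem_ball_iff_norm]
  have hR : 0 < R := (norm_nonneg _).trans_lt hh
  set δ' := min δ R with hδ'
  have hδ'0 : 0 < δ' := lt_min hδ hR
  set η : ℝ := δ' / (‖h‖ + 1) with hη
  have hη0 : 0 < η := by positivity
  have hηh : η * ‖h‖ ≤ δ' := by
    rw [hη, div_mul_eq_mul_div, div_le_iff₀ (by positivity)]
    nlinarith
  have hder : ∀ k, IsCLF fun a => iteratedDeriv k (fun t : ℂ => T a (w + t • h)) 0 :=
    fun k => IsCLF.iterDeriv (D := ball 0 η) isOpen_ball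
      (fun a => analyticOnNhd_line (hT a) (hηh.trans (min_le_right _ _)) hR)
      (fun t ht => by
        refine hw _ ?_
        rw [mem_ball_zero_iff] at ht
        rw [mem_ball_iff_norm, add_sub_cancel_left, norm_smul]
        calc ‖t‖ * ‖h‖ ≤ ‖t‖ * (‖h‖ + 1) := by gcongr; linarith
          _ < η * (‖h‖ + 1) := by gcongr
          _ = δ' := by rw [hη]; field_simp
          _ ≤ δ := min_le_left _ _) k 0 (mem_ball_self hη0)
  refine IsCLF.of_tendsto (l := atTop) (φ := fun N a => ∑ k ∈ Finset.range N,
    (k.factorial : ℂ)⁻¹ * iteratedDeriv k (fun t : ℂ => T a (w + t • h)) 0)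
    (.of_forall fun N => IsCLF.sum fun k _ => hder k) fun a => ?_
  have := (hasSum_taylor_line (hT a) hh).tendsto_sum_nat
  rwa [show w + h = z by simp [h]] at this

/-- Continuous dependence on the parameter `a` spreads from an open subset to a connected set on
which all `T a` are analytic. No linearity of `T` outside `U` is assumed: it spreads as well. -/
theorem IsCLF.propagate [CompleteSpace X] {T : X → E → ℂ} {U V : Set E} (hU : IsOpen U)
    (hV : IsOpen V) (hUV : U ⊆ V) (hUne : U.Nonempty) (hVconn : IsPreconnected V)
    (hT : ∀ a, AnalyticOnNhd ℂ (T a) V) (hTU : ∀ z ∈ U, IsCLF fun a => T a z) :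
    ∀ z ∈ V, IsCLF fun a => T a z := by
  set C : Set E := interior {z | IsCLF fun a => T a z} with hC
  have hUC : U ⊆ C := interior_maximal hTU hU
  have key : closure C ∩ V ⊆ C := by
    rintro z ⟨hzC, hzV⟩
    obtain ⟨R, hR, hRV⟩ := Metric.isOpen_iff.mp hV z hzV
    obtain ⟨w, hwC, hwz⟩ := Metric.mem_closure_iff.mp hzC (R / 2) (by positivity)
    obtain ⟨δ, hδ, hδC⟩ := Metric.isOpen_iff.mp isOpen_interior w hwC
    have hsub : ball w (R / 2) ⊆ ball z R := ball_subset_ball' (by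
      rw [dist_comm]; linarith)
    refine interior_maximal (s := {z | IsCLF fun a => T a z}) (t := ball w (R / 2)) ?_
      isOpen_ball (mem_ball.mpr hwz)
    intro y hy
    exact IsCLF.of_ball hδ (fun a => (hT a).mono (hsub.trans hRV))
      (fun y hy => interior_subset (s := {z | IsCLF fun a => T a z}) (hδC hy)) hy
  intro z hz
  have hVC : V ⊆ C := by
    refine hVconn.subset_of_closure_inter_subset isOpen_interior ?_ key
    obtain ⟨u, hu⟩ := hUne
    exact ⟨u, hUV hu, hUC hu⟩
  exact interior_subset (s := {z | IsCLF fun a => T a z}) (hVC hz)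

end Propagation

/-! ### `U`-bounded sets and series in `H_b(U)` -/

theorem uBounded_UNat {U : Set E} (n : ℕ) : UBounded U (UNat U (n + 1)) := by
  refine ⟨fun x hx => hx.1, ?_, 1 / ((n + 1 : ℕ) : ℝ), by positivity, fun a ha => ha.2.2⟩
  exact (isBounded_closedBall (x := (0 : E)) (r := ((n + 1 : ℕ) : ℝ))).subset fun x hx => by
    simpa using hx.2.1

theorem UBounded.exists_subset_UNat {U A : Set E} (hA : UBounded U A) :
    ∃ N : ℕ, ∀ n ≥ N, A ⊆ UNat U (n + 1) := by
  obtain ⟨hAU, hAb, d, hd, hball⟩ := hA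
  obtain ⟨R, hR⟩ := hAb.exists_norm_le
  obtain ⟨N₁, hN₁⟩ := exists_nat_ge R
  obtain ⟨N₂, hN₂⟩ := exists_nat_one_div_lt hd
  refine ⟨max N₁ N₂, fun n hn x hx => ⟨hAU hx, ?_, (ball_subset_ball ?_).trans (hball x hx)⟩⟩
  · have h1 : (N₁ : ℝ) ≤ n := by exact_mod_cast (le_max_left _ _).trans hn
    push_cast
    linarith [hR x hx]
  · have h2 : (N₂ : ℝ) ≤ n := by exact_mod_cast (le_max_right _ _).trans hn
    refine le_trans ?_ hN₂.le
    push_cast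
    gcongr

theorem uBounded_ball {U : Set E} {x : E} {r : ℝ} (h : ball x r ⊆ U) (hr : 0 < r) :
    UBounded U (ball x (r / 2)) := by
  refine ⟨(ball_subset_ball (by linarith)).trans h, isBounded_ball, r / 2, by positivity,
    fun a ha => (ball_subset_ball' ?_).trans h⟩
  linarith [mem_ball.mp ha]

theorem exists_uniform_bound {U A : Set E} (hA : UBounded U A) {f : ℕ → E → ℂ}
    (hf : ∀ n, MemHb U (f n)) (hb : ∀ n, ∀ x ∈ UNat U (n + 1), ‖f n x‖ ≤ 1) :
    ∃ K : ℝ, ∀ n, ∀ x ∈ A, ‖f n x‖ ≤ K := by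
  obtain ⟨N, hN⟩ := hA.exists_subset_UNat
  choose C hC using fun n => (hf n).2 A hA
  refine ⟨1 + ∑ n ∈ Finset.range N, |C n|, fun n x hx => ?_⟩
  have h0 : 0 ≤ ∑ n ∈ Finset.range N, |C n| := Finset.sum_nonneg fun _ _ => abs_nonneg _
  rcases lt_or_ge n N with h | h
  · have := Finset.single_le_sum (f := fun n => |C n|) (fun _ _ => abs_nonneg _)
      (Finset.mem_range.mpr h)
    linarith [hC n x hx, le_abs_self (C n)]
  · linarith [hb n x (hN n h hx)]

theorem memHb_tsum {U : Set E} (hU : IsOpen U) {f : ℕ → E → ℂ}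
    (hf : ∀ n, MemHb U (f n)) (hb : ∀ n, ∀ x ∈ UNat U (n + 1), ‖f n x‖ ≤ 1)
    {a : ℕ → ℂ} (ha : Summable fun n => ‖a n‖) : MemHb U fun x => ∑' n, a n * f n x := by
  constructor
  · intro x hx
    obtain ⟨r, hr, hrU⟩ := Metric.isOpen_iff.mp hU x hx
    have hB := uBounded_ball hrU hr
    obtain ⟨K, hK⟩ := exists_uniform_bound hB hf hb
    refine analyticAt_tsum (half_pos hr) (ha.mul_right K)
      (fun n y hy => analyticAt_const.mul ((hf n).1 y (hB.1 hy))) fun n y hy => ?_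
    rw [norm_mul]
    exact mul_le_mul_of_nonneg_left (hK n y hy) (norm_nonneg _)
  · intro A hA
    obtain ⟨K, hK⟩ := exists_uniform_bound hA hf hb
    refine ⟨∑' n, ‖a n‖ * K, fun x hx => tsum_of_norm_bounded (ha.mul_right K).hasSum fun n => ?_⟩
    rw [norm_mul]
    exact mul_le_mul_of_nonneg_left (hK n x hx) (norm_nonneg _)

theorem lp_one_summable (a : lp (fun _ : ℕ => ℂ) 1) : Summable fun n => ‖a n‖ := by
  simpa using (lp.memℓp a).summable (by simp)

/-- If `|f n| ≤ 1` on `U_(n+1)` for all `n`, then the extensions of the `f n` are bounded at each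
point of `V`. The functional `a ↦ (∑ a n • f n)~ z` on `ℓ¹` is continuous, and its values at the
unit vectors are the numbers in question. -/
theorem exists_bound_extension {U V : Set E} (hU : IsOpen U) (hV : IsOpen V) (hUV : U ⊆ V)
    (hUne : U.Nonempty) (hVconn : IsPreconnected V)
    (hext : ∀ f : E → ℂ, MemHb U f → ∃ g : E → ℂ, AnalyticOnNhd ℂ g V ∧ Set.EqOn g f U)
    {f g : ℕ → E → ℂ} (hf : ∀ n, MemHb U (f n))
    (hb : ∀ n, ∀ x ∈ UNat U (n + 1), ‖f n x‖ ≤ 1) (hg : ∀ n, AnalyticOnNhd ℂ (g n) V)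
    (hgf : ∀ n, EqOn (g n) (f n) U) {z : E} (hz : z ∈ V) : ∃ M : ℝ, ∀ n, ‖g n z‖ ≤ M := by
  choose T hT hTU using fun a : lp (fun _ : ℕ => ℂ) 1 =>
    hext _ (memHb_tsum hU hf hb (lp_one_summable a))
  have hCLF : ∀ y ∈ U, IsCLF fun a => T a y := by
    intro y hy
    have hy' : UBounded U {y} := by
      obtain ⟨r, hr, hrU⟩ := Metric.isOpen_iff.mp hU y hy
      exact ⟨by simpa using hy, Bornology.isBounded_singleton, r, hr, by simpa using hrU⟩
    obtain ⟨K, hK⟩ := exists_uniform_bound hy' hf hb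
    refine IsCLF.of_tendsto (l := atTop)
      (φ := fun N a => ∑ n ∈ Finset.range N, f n y * (a n)) (.of_forall fun N =>
        IsCLF.sum fun n _ => ⟨lp.evalCLM ℂ (fun _ : ℕ => ℂ) 1 n, fun a => rfl⟩) fun a => ?_
    rw [hTU a hy]
    simp_rw [mul_comm (f _ y)]
    refine (Summable.hasSum (.of_norm_bounded ((lp_one_summable a).mul_right K)
      fun n => ?_)).tendsto_sum_nat
    rw [norm_mul]
    exact mul_le_mul_of_nonneg_left (hK n y rfl) (norm_nonneg _)
  obtain ⟨L, hL⟩ := IsCLF.propagate hU hV hUV hUne hVconn hT hCLF z hz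
  refine ⟨‖L‖, fun n => ?_⟩
  let e : lp (fun _ : ℕ => ℂ) 1 := lp.single 1 n 1
  have he : EqOn (T e) (g n) V := by
    obtain ⟨u, hu⟩ := hUne
    refine (hT e).eqOn_of_preconnected_of_eventuallyEq (hg n) hVconn (hUV hu) ?_
    filter_upwards [hU.mem_nhds hu] with y hy
    rw [hTU e hy, hgf n hy]
    dsimp only
    rw [tsum_eq_single n]
    · simp [e]
    · intro m hm
      simp [e, hm]
  rw [← he hz, ← show L e = T e z from hL e]
  refine (L.le_opNorm e).trans_eq ?_
  simp [e, lp.norm_single]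

/-! ### The algebra `H_b(U)` and removal of the constant -/

theorem UBounded.union {U A B : Set E} (hA : UBounded U A) (hB : UBounded U B) :
    UBounded U (A ∪ B) := by
  obtain ⟨h1, h2, d, hd, h3⟩ := hA
  obtain ⟨h1', h2', d', hd', h3'⟩ := hB
  refine ⟨union_subset h1 h1', h2.union h2', min d d', lt_min hd hd', ?_⟩
  rintro a (ha | ha)
  · exact (ball_subset_ball (min_le_left _ _)).trans (h3 a ha)
  · exact (ball_subset_ball (min_le_right _ _)).trans (h3' a ha)

theorem MemHb.add {U : Set E} {f g : E → ℂ} (hf : MemHb U f) (hg : MemHb U g) :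
    MemHb U (f + g) := by
  refine ⟨hf.1.add hg.1, fun A hA => ?_⟩
  obtain ⟨C, hC⟩ := hf.2 A hA
  obtain ⟨D, hD⟩ := hg.2 A hA
  exact ⟨C + D, fun x hx => norm_add_le_of_le (hC x hx) (hD x hx)⟩

theorem MemHb.mul {U : Set E} {f g : E → ℂ} (hf : MemHb U f) (hg : MemHb U g) :
    MemHb U (f * g) := by
  refine ⟨hf.1.mul hg.1, fun A hA => ?_⟩
  obtain ⟨C, hC⟩ := hf.2 A hA
  obtain ⟨D, hD⟩ := hg.2 A hA
  refine ⟨C * D, fun x hx => ?_⟩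
  rw [Pi.mul_apply, norm_mul]
  exact mul_le_mul (hC x hx) (hD x hx) (norm_nonneg _) ((norm_nonneg _).trans (hC x hx))

theorem memHb_const {U : Set E} (c : ℂ) : MemHb U fun _ => c :=
  ⟨analyticOnNhd_const, fun _ _ => ⟨‖c‖, fun _ _ => le_rfl⟩⟩

theorem MemHb.smul {U : Set E} {f : E → ℂ} (c : ℂ) (hf : MemHb U f) : MemHb U (c • f) :=
  (memHb_const c).mul hf

theorem MemHb.pow {U : Set E} {f : E → ℂ} (hf : MemHb U f) (k : ℕ) : MemHb U (f ^ k) := by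
  induction k with
  | zero => exact memHb_const 1
  | succ k ih => rw [pow_succ]; exact ih.mul hf

/-- If all powers satisfy `x ^ k ≤ M * C ^ k`, then `x ≤ C`. -/
theorem le_of_forall_pow_le {x C M : ℝ} (hC : 0 < C)
    (h : ∀ k : ℕ, x ^ k ≤ M * C ^ k) : x ≤ C := by
  by_contra! hlt
  have h1 : 1 < x / C := (one_lt_div hC).mpr hlt
  obtain ⟨k, hk⟩ := pow_unbounded_of_one_lt M h1
  rw [div_pow, lt_div_iff₀ (by positivity)] at hk
  exact absurd (h k) (not_le.mpr hk)

/-- A single `U`-bounded set dominates the evaluation of extensions at `z`. -/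
theorem exists_dominating_set {U V : Set E} (hU : IsOpen U) (hV : IsOpen V) (hUV : U ⊆ V)
    (hUne : U.Nonempty) (hVconn : IsPreconnected V)
    (hext : ∀ f : E → ℂ, MemHb U f → ∃ g : E → ℂ, AnalyticOnNhd ℂ g V ∧ Set.EqOn g f U)
    {z : E} (hz : z ∈ V) :
    ∃ B, UBounded U B ∧ ∀ f g : E → ℂ, MemHb U f → AnalyticOnNhd ℂ g V → EqOn g f U →
      ∀ C : ℝ, (∀ x ∈ B, ‖f x‖ ≤ C) → ‖g z‖ ≤ C := by
  have hn : ∃ n : ℕ, ∀ f g : E → ℂ, MemHb U f → AnalyticOnNhd ℂ g V → EqOn g f U →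
      (∀ x ∈ UNat U (n + 1), ‖f x‖ ≤ 1) → ‖g z‖ ≤ n := by
    by_contra! hcon
    choose f g hf hg hgf hb hgz using hcon
    obtain ⟨M, hM⟩ := exists_bound_extension hU hV hUV hUne hVconn hext hf hb hg hgf hz
    obtain ⟨n, hMn⟩ := exists_nat_ge M
    exact absurd ((hgz n).trans_le (hM n)) (not_lt.mpr hMn)
  obtain ⟨n, hn⟩ := hn
  obtain ⟨u, hu⟩ := hUne
  obtain ⟨r, hr, hrU⟩ := Metric.isOpen_iff.mp hU u hu
  -- the ball makes the set nonempty, so that an upper bound `C` is nonnegative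
  refine ⟨UNat U (n + 1) ∪ ball u (r / 2), (uBounded_UNat n).union (uBounded_ball hrU hr), ?_⟩
  intro f g hf hg hgf C hC
  have hC0 : 0 ≤ C := (norm_nonneg _).trans (hC u (.inr (mem_ball_self (half_pos hr))))
  -- passing to `D > C` avoids dividing by zero when `f` vanishes on the set
  refine le_of_forall_gt_imp_ge_of_dense fun D hD => ?_
  have hD0 : 0 < D := hC0.trans_lt hD
  refine le_of_forall_pow_le (M := n) hD0 fun k => ?_
  have h := hn (((D : ℂ) ^ k)⁻¹ • f ^ k) (((D : ℂ) ^ k)⁻¹ • g ^ k) ((hf.pow k).smul _)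
    (analyticOnNhd_const.mul (hg.pow k)) (fun x hx => by simp [hgf hx]) (fun x hx => by
      simp only [Pi.smul_apply, Pi.pow_apply, smul_eq_mul, norm_mul, norm_inv, norm_pow,
        Complex.norm_real, Real.norm_of_nonneg hD0.le]
      rw [inv_mul_le_iff₀ (by positivity), mul_one]
      exact pow_le_pow_left₀ (norm_nonneg _) ((hC x (.inl hx)).trans hD.le) k)
  simp only [Pi.smul_apply, Pi.pow_apply, smul_eq_mul, norm_mul, norm_inv, norm_pow,
        Complex.norm_real, Real.norm_of_nonneg hD0.le] at h
  rwa [inv_mul_le_iff₀ (by positivity), mul_comm] at h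

/-- If `U ⊆ V` are connected open sets (`U` nonempty) such that every
`f ∈ H_b(U)` extends holomorphically to `V`, then for every `z ∈ V` the evaluation
`f ↦ f̃(z)` is a continuous character of `H_b(U)`. -/
theorem stmt_19 {E : Type*} [NormedAddCommGroup E] [NormedSpace ℂ E] [CompleteSpace E]
    (U V : Set E) (hU : IsOpen U) (hV : IsOpen V) (hUV : U ⊆ V)
    (hUconn : IsConnected U) (hVconn : IsConnected V)
    (hext : ∀ f : E → ℂ, MemHb U f → ∃ g : E → ℂ, AnalyticOnNhd ℂ g V ∧ Set.EqOn g f U) :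
    ∀ z ∈ V, ∃ φ : (E → ℂ) → ℂ, IsHbChar U φ ∧
      ∀ (f g : E → ℂ), MemHb U f → AnalyticOnNhd ℂ g V → Set.EqOn g f U →
        φ f = g z := by
  intro z hz
  classical
  obtain ⟨u, hu⟩ := hUconn.nonempty
  have huniq : ∀ g g' : E → ℂ, AnalyticOnNhd ℂ g V → AnalyticOnNhd ℂ g' V → EqOn g g' U →
      g z = g' z := fun g g' hg hg' h =>
    hg.eqOn_of_preconnected_of_eventuallyEq hg' hVconn.isPreconnected (hUV hu)
      (h.eventuallyEq_of_mem (hU.mem_nhds hu)) hz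
  choose! T hT hTU using hext
  have hval : ∀ f g : E → ℂ, MemHb U f → AnalyticOnNhd ℂ g V → EqOn g f U → T f z = g z :=
    fun f g hf hg hgf => huniq _ _ (hT f hf) hg ((hTU f hf).trans hgf.symm)
  refine ⟨fun f => T f z, ⟨?_, ?_, ?_, ?_, ?_⟩, hval⟩
  · exact hval _ (fun _ => 1) (memHb_const 1) analyticOnNhd_const fun _ _ => rfl
  · intro f g hf hg
    exact hval _ (T f + T g) (hf.add hg) ((hT f hf).add (hT g hg)) fun x hx => by
      simp [hTU f hf hx, hTU g hg hx]
  · intro c f hf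
    exact hval _ (c • T f) (hf.smul c) (analyticOnNhd_const.mul (hT f hf)) fun x hx => by
      simp [hTU f hf hx]
  · intro f g hf hg
    exact hval _ (T f * T g) (hf.mul hg) ((hT f hf).mul (hT g hg)) fun x hx => by
      simp [hTU f hf hx, hTU g hg hx]
  · obtain ⟨B, hB, h⟩ := exists_dominating_set hU hV hUV ⟨u, hu⟩ hVconn.isPreconnected
      (fun f hf => ⟨T f, hT f hf, hTU f hf⟩) hz
    exact ⟨B, hB, fun f hf => h f (T f) hf (hT f hf) (hTU f hf)⟩
end
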